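/- arXiv:1808.06938 — 5 statements merged into one kernel-verified Lean document; each statement's English description precedes it below -/
import Mathlib

section
/- (Hoffman–Rossi theorem, commutative case.) Let μ be a probability measure on a measurable space Ω, and let A be a subalgebra of L^∞(μ; ℂ) containing the constant function 1, which is closed in the weak* topology on L^∞(μ), i.e. the topology induced by the maps x ↦ ∫ x·f dμ for f ∈ L¹(μ; ℂ). Let φ : A → ℂ be a linear map with φ(1) = 1 and φ(xy) = φ(x)φ(y) for all x, y ∈ A, which is continuous with respect to the (relative) weak* topology on A. Then there exists g ∈ L¹(μ) with g ≥ 0 almost everywhere and ∫ g dμ = 1, such that φ(x) = ∫ x·g dμ for all x ∈ A. That is, φ has a normal state extension to L^∞(μ). -/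
open MeasureTheory

set_option synthInstance.maxHeartbeats 1000000
set_option maxHeartbeats 1000000

/-- The weak* topology on (representatives of) `L^∞(μ; ℂ)`, realized on the space of all
functions `Ω → ℂ`: the coarsest topology making each pairing `x ↦ ∫ x·f dμ` against an
integrable function `f` continuous. -/
noncomputable def weakStarTopology {Ω : Type*} [MeasurableSpace Ω] (μ : Measure Ω) :
    TopologicalSpace (Ω → ℂ) :=
  ⨅ (f : Ω → ℂ) (_ : Integrable f μ),
    TopologicalSpace.induced (fun x : Ω → ℂ => ∫ ω, x ω * f ω ∂μ) inferInstance

lemma hr_step1 {Ω : Type*} [MeasurableSpace Ω] (μ : Measure Ω)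
    (A : Subalgebra ℂ (Ω → ℂ))
    (hbdd : ∀ x ∈ A, MemLp x ⊤ μ)
    (φ : A →ₗ[ℂ] ℂ)
    (hcont : @Continuous A ℂ
      (TopologicalSpace.induced ((↑) : A → Ω → ℂ) (weakStarTopology μ)) _ φ) :
    ∃ f : Ω → ℂ, Integrable f μ ∧ ∀ x : A, φ x = ∫ ω, (x : Ω → ℂ) ω * f ω ∂μ := by
  classical
  have hint : ∀ (x : A) (f : Ω → ℂ), Integrable f μ →
      Integrable (fun ω => (x : Ω → ℂ) ω * f ω) μ := fun x f hf =>
    hf.mul_of_top_right (hbdd x x.2)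
  let L : {f : Ω → ℂ // Integrable f μ} → (A →ₗ[ℂ] ℂ) := fun f =>
    { toFun := fun x => ∫ ω, (x : Ω → ℂ) ω * f.1 ω ∂μ
      map_add' := by
        intro x y
        rw [← integral_add (hint x _ f.2) (hint y _ f.2)]
        simp [add_mul]
      map_smul' := by
        intro c x
        simp [mul_assoc, integral_const_mul] }
  have htop : TopologicalSpace.induced ((↑) : A → Ω → ℂ) (weakStarTopology μ)
      = ⨅ f : {f : Ω → ℂ // Integrable f μ}, TopologicalSpace.induced (L f) inferInstance := by
    unfold weakStarTopology
    rw [iInf_subtype]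
    simp only [induced_iInf, induced_compose]
    rfl
  rw [htop] at hcont
  have h1 := @Continuous.continuousAt _ _ (_) _ _ (0 : A) hcont
  unfold ContinuousAt at h1
  rw [nhds_iInf] at h1
  simp only [nhds_induced, map_zero] at h1
  have h2 := h1 (Metric.ball_mem_nhds (0:ℂ) one_pos)
  rw [Filter.mem_map, Filter.mem_iInf] at h2
  obtain ⟨I, hI, V, hV, hVeq⟩ := h2
  have : Fintype I := hI.fintype
  have hker : ⨅ i : I, LinearMap.ker (L i.1) ≤ LinearMap.ker φ := by
    intro x hx
    simp only [Submodule.mem_iInf, LinearMap.mem_ker] at hx ⊢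
    have key : ∀ c : ℂ, ‖φ (c • x)‖ < 1 := by
      intro c
      have : c • x ∈ φ ⁻¹' Metric.ball 0 1 := by
        rw [hVeq]
        simp only [Set.mem_iInter]
        intro i
        obtain ⟨t, ht, hts⟩ := Filter.mem_comap.1 (hV i)
        apply hts
        simp only [Set.mem_preimage, map_smul, hx i, smul_zero]
        exact mem_of_mem_nhds ht
      simpa using this
    by_contra hne
    have := key (φ x)⁻¹
    simp [hne] at this
  have hsp := mem_span_of_iInf_ker_le_ker hker
  rw [Submodule.mem_span_range_iff_exists_fun] at hsp
  obtain ⟨c, hc⟩ := hsp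
  refine ⟨fun ω => ∑ i, c i * i.1.1 ω, integrable_finsetSum _ fun i _ => i.1.2.const_mul _, ?_⟩
  intro x
  rw [← hc]
  simp only [LinearMap.sum_apply, LinearMap.smul_apply, smul_eq_mul, Finset.mul_sum]
  rw [integral_finsetSum]
  · refine Finset.sum_congr rfl fun i _ => ?_
    change c i * ∫ ω, (x : Ω → ℂ) ω * i.1.1 ω ∂μ = _
    rw [← integral_const_mul]
    congr 1; ext ω; ring
  · intro i _
    exact hint x _ (i.1.2.const_mul _)

lemma hr_inner {Ω : Type*} [MeasurableSpace Ω] {μ : Measure Ω} {a b : Ω → ℂ}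
    (ha : MemLp a 2 μ) (hb : MemLp b 2 μ) :
    inner ℂ (ha.toLp a) (hb.toLp b) = ∫ ω, b ω * star (a ω) ∂μ := by
  rw [L2.inner_def]
  apply integral_congr_ae
  filter_upwards [ha.coeFn_toLp, hb.coeFn_toLp] with ω h1 h2
  rw [h1, h2]
  simp [mul_comm]

theorem hoffman_rossi_commutative {Ω : Type*} [MeasurableSpace Ω] (μ : Measure Ω)
    [IsProbabilityMeasure μ]
    (A : Subalgebra ℂ (Ω → ℂ))
    (hbdd : ∀ x ∈ A, MemLp x ⊤ μ)
    (hclosed : ∀ x : Ω → ℂ, MemLp x ⊤ μ →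
      x ∈ @closure _ (weakStarTopology μ) (A : Set (Ω → ℂ)) → x ∈ A)
    (φ : A →ₗ[ℂ] ℂ)
    (hunit : φ 1 = 1)
    (hmul : ∀ x y : A, φ (x * y) = φ x * φ y)
    (hcont : @Continuous A ℂ
      (TopologicalSpace.induced ((↑) : A → Ω → ℂ) (weakStarTopology μ)) _ φ) :
    ∃ g : Ω → ℝ,
      Integrable g μ ∧ (∀ᵐ ω ∂μ, 0 ≤ g ω) ∧ (∫ ω, g ω ∂μ) = 1 ∧
      ∀ x : A, φ x = ∫ ω, (x : Ω → ℂ) ω * (g ω : ℂ) ∂μ := by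
  obtain ⟨f, hf, hφ⟩ := hr_step1 μ A hbdd φ hcont
  let ξ : Ω → ℂ := fun ω => ((Real.sqrt ‖f ω‖ : ℝ) : ℂ)
  let η : Ω → ℂ := fun ω => star (f ω) * (((Real.sqrt ‖f ω‖)⁻¹ : ℝ) : ℂ)
  have hfm := hf.aestronglyMeasurable.aemeasurable
  have hξ : MemLp ξ 2 μ := by
    rw [memLp_two_iff_integrable_sq_norm]
    · refine hf.norm.congr (Filter.Eventually.of_forall fun ω => ?_)
      simp [ξ, Real.sq_sqrt, abs_of_nonneg]
    · exact (Complex.measurable_ofReal.comp_aemeasurable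
        (hfm.norm.sqrt)).aestronglyMeasurable
  have hη : MemLp η 2 μ := by
    rw [memLp_two_iff_integrable_sq_norm]
    · refine hf.norm.congr (Filter.Eventually.of_forall fun ω => ?_)
      by_cases h : f ω = 0
      · simp [η, h]
      · have : ‖f ω‖ ≠ 0 := by simpa using h
        simp [η, mul_pow, Real.sq_sqrt, abs_of_nonneg]
        field_simp
    · exact ((hf.aestronglyMeasurable.star).mul (Complex.measurable_ofReal.comp_aemeasurable
        (hfm.norm.sqrt.inv)).aestronglyMeasurable)
  have hprod : ∀ ω, ξ ω * star (η ω) = f ω := by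
    intro ω
    by_cases h : f ω = 0
    · simp [η, h]
    · have : ((Real.sqrt ‖f ω‖ : ℝ) : ℂ) ≠ 0 := by simpa using h
      simp [η, ξ]
      field_simp
  have hm : ∀ (x : A) {b : Ω → ℂ}, MemLp b 2 μ → MemLp (fun ω => (x : Ω → ℂ) ω * b ω) 2 μ :=
    fun x b hb => hb.mul (hbdd x x.2)
  have hms : ∀ (x : A) {b : Ω → ℂ}, MemLp b 2 μ →
      MemLp (fun ω => star ((x : Ω → ℂ) ω) * b ω) 2 μ :=
    fun x b hb => hb.mul (hbdd x x.2).star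
  let T : A →ₗ[ℂ] Lp ℂ 2 μ :=
    { toFun := fun x => (hm x hξ).toLp _
      map_add' := by
        intro x y
        rw [← MemLp.toLp_add]
        congr 1; ext ω; simp [add_mul]
      map_smul' := by
        intro c x
        simp only [RingHom.id_apply]
        rw [← MemLp.toLp_const_smul]
        congr 1; ext ω; simp [mul_assoc] }
  let K : Submodule ℂ (Lp ℂ 2 μ) := (LinearMap.ker φ).map T
  obtain ⟨p, hp, e, he, hpe⟩ :=
    Submodule.exists_add_mem_mem_orthogonal (K := K.topologicalClosure) (hξ.toLp ξ)
  have horth : ∀ w : Lp ℂ 2 μ, (∀ x : A, φ x = 0 → inner ℂ w (T x) = 0) → inner ℂ w p = 0 := by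
    intro w hw
    have : w ∈ Kᗮ := by
      rw [Submodule.mem_orthogonal']
      rintro _ ⟨x, hx, rfl⟩
      exact hw x hx
    rw [← Submodule.orthogonal_closure, Submodule.mem_orthogonal'] at this
    exact this p hp
  have heK : ∀ x : A, φ x = 0 → inner ℂ e (T x) = 0 := by
    intro x hx
    rw [Submodule.mem_orthogonal'] at he
    exact he _ (K.le_topologicalClosure ⟨x, hx, rfl⟩)
  have hηT : ∀ x : A, inner ℂ (hη.toLp η) (T x) = φ x := by
    intro x
    change inner ℂ (hη.toLp η) ((hm x hξ).toLp _) = φ x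
    rw [hr_inner, hφ]
    simp only [mul_assoc, hprod]
  have hT1 : T 1 = hξ.toLp ξ := by
    change (hm 1 hξ).toLp _ = _
    congr 1; ext ω; simp
  have hene : e ≠ 0 := by
    intro h0
    have h1 := horth (hη.toLp η) (fun x hx => by rw [hηT, hx])
    have h2 := hηT 1
    rw [hT1, hpe, h0, add_zero, h1, hunit] at h2
    exact zero_ne_one h2
  have hem : MemLp (e : Ω → ℂ) 2 μ := Lp.memLp e
  have heto : hem.toLp _ = e := Lp.toLp_coeFn e hem
  have hmain : ∀ x : A, φ x = 0 → ∫ ω, (x : Ω → ℂ) ω * ((‖e ω‖ ^ 2 : ℝ) : ℂ) ∂μ = 0 := by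
    intro x hx
    have hwT : ∀ a : A, inner ℂ ((hms x hem).toLp _) (T a) = 0 := by
      intro a
      have := heK (x * a) (by rw [hmul, hx, zero_mul])
      rw [← heto] at this
      change inner ℂ (hem.toLp _) ((hm (x * a) hξ).toLp _) = 0 at this
      rw [hr_inner] at this
      change inner ℂ ((hms x hem).toLp _) ((hm a hξ).toLp _) = 0
      rw [hr_inner, ← this]
      congr 1; ext ω
      simp
      ring
    have h1 := horth _ (fun a _ => hwT a)
    have h2 := hwT 1
    rw [hT1, hpe, inner_add_right, h1, zero_add] at h2
    replace h2 : inner ℂ ((hms x hem).toLp _) (hem.toLp _) = 0 := by rw [heto]; exact h2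
    rw [hr_inner] at h2
    rw [← h2]
    congr 1; ext ω
    have : ((‖e ω‖ ^ 2 : ℝ) : ℂ) = e ω * star (e ω) := by
      simp [Complex.mul_conj, Complex.normSq_eq_norm_sq]
    rw [this]
    simp
    ring
  have hint : Integrable (fun ω => ‖e ω‖ ^ 2) μ :=
    (memLp_two_iff_integrable_sq_norm hem.1).1 hem
  set c := ∫ ω, ‖e ω‖ ^ 2 ∂μ with hc
  have hc0 : c ≠ 0 := by
    intro h
    rw [hc, integral_eq_zero_iff_of_nonneg (fun ω => by positivity) hint] at h
    apply hene
    rw [Lp.eq_zero_iff_ae_eq_zero]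
    filter_upwards [h] with ω hω
    simpa using hω
  have hg1 : ∫ ω, ‖e ω‖ ^ 2 / c ∂μ = 1 := by
    rw [integral_div, ← hc, div_self hc0]
  have hcpos : 0 ≤ c := integral_nonneg fun ω => by positivity
  refine ⟨fun ω => ‖e ω‖ ^ 2 / c, hint.div_const c,
    Filter.Eventually.of_forall fun ω => by positivity, hg1, ?_⟩
  intro x
  have hx0 : φ (x - φ x • 1) = 0 := by simp [hunit]
  have h := hmain _ hx0
  have hi1 : Integrable (fun ω => (x : Ω → ℂ) ω * ((‖e ω‖ ^ 2 : ℝ) : ℂ)) μ :=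
    hint.ofReal.mul_of_top_right (hbdd x x.2)
  have hi2 : Integrable (fun ω => φ x * ((‖e ω‖ ^ 2 : ℝ) : ℂ)) μ :=
    hint.ofReal.const_mul _
  have h3 : ∫ ω, (x : Ω → ℂ) ω * ((‖e ω‖ ^ 2 : ℝ) : ℂ) ∂μ = φ x * c := by
    rw [hc, ← integral_complex_ofReal, ← integral_const_mul, ← sub_eq_zero,
      ← integral_sub hi1 hi2, ← h]
    congr 1; ext ω
    simp [sub_mul]
  have hcc : (c : ℂ) ≠ 0 := by exact_mod_cast hc0
  have h4 : ∫ ω, (x : Ω → ℂ) ω * ((‖e ω‖ ^ 2 / c : ℝ) : ℂ) ∂μ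
      = (∫ ω, (x : Ω → ℂ) ω * ((‖e ω‖ ^ 2 : ℝ) : ℂ) ∂μ) / c := by
    rw [← integral_div]
    congr 1; ext ω
    push_cast
    ring
  rw [h4, h3, mul_div_cancel_right₀ _ hcc]
end

section
/- (Hoffman–Rossi theorem for B(H).) Let H be a complex Hilbert space and let A be a unital subalgebra of B(H) which is σ-weakly closed, in the sense that for every x ∈ B(H) with x ∉ A there exists a σ-weakly continuous linear functional on B(H) vanishing on A but not at x. Let φ : A → ℂ be linear with φ(1) = 1 and φ(ab) = φ(a)φ(b) for all a, b ∈ A, and suppose φ is σ-weakly continuous, i.e. there exist sequences (η_n), (ζ_n) in H with Σ_n ‖η_n‖² < ∞ and Σ_n ‖ζ_n‖² < ∞ such that φ(a) = Σ_n ⟨a η_n, ζ_n⟩ for all a ∈ A. Then there exists a sequence (ξ_n) in H with Σ_n ‖ξ_n‖² = 1 such that φ(a) = Σ_n ⟨a ξ_n, ξ_n⟩ for all a ∈ A. That is, φ has a normal state extension to B(H). -/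
open MeasureTheory

set_option synthInstance.maxHeartbeats 1000000
set_option maxHeartbeats 1000000

/-- The abstract argument: a commutation-free Hilbert space version with one vector. -/
theorem hr_aux {K R : Type*} [NormedAddCommGroup K] [InnerProductSpace ℂ K] [CompleteSpace K]
    [Ring R] [Algebra ℂ R] (T : R → K →L[ℂ] K)
    (hadd : ∀ a b x, T (a + b) x = T a x + T b x)
    (hsmul : ∀ (c : ℂ) a x, T (c • a) x = c • T a x)
    (hone : ∀ x, T 1 x = x) (hTmul : ∀ a b x, T (a * b) x = T a (T b x))
    (φ : R →ₗ[ℂ] ℂ) (hunit : φ 1 = 1) (hmul : ∀ a b, φ (a * b) = φ a * φ b)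
    (η ζ : K) (h : ∀ a, φ a = inner ℂ ζ (T a η)) :
    ∃ ξ : K, ‖ξ‖ = 1 ∧ ∀ a, φ a = inner ℂ ξ (T a ξ) := by
  let N0 : Submodule ℂ K :=
    { carrier := {x | ∃ a, φ a = 0 ∧ T a η = x}
      add_mem' := by
        rintro _ _ ⟨a, ha, rfl⟩ ⟨b, hb, rfl⟩
        exact ⟨a + b, by simp [ha, hb], hadd _ _ _⟩
      zero_mem' := ⟨0, by simp, by simpa using hsmul 0 0 η⟩
      smul_mem' := by
        rintro c _ ⟨a, ha, rfl⟩
        exact ⟨c • a, by simp [ha], hsmul _ _ _⟩ }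
  let N := N0.topologicalClosure
  have hNc : IsClosed (N : Set K) := N0.isClosed_topologicalClosure
  haveI : CompleteSpace N := hNc.completeSpace_coe
  have hζ : ∀ x ∈ N, inner ℂ ζ x = 0 := by
    have hc : IsClosed {x : K | inner ℂ ζ x = 0} :=
      isClosed_eq (by fun_prop) continuous_const
    intro x hx
    refine closure_minimal (t := {x : K | inner ℂ ζ x = 0}) ?_ hc hx
    rintro _ ⟨a, ha, rfl⟩
    exact (h a).symm.trans ha
  have hTN : ∀ a, ∀ x ∈ N, T a x ∈ N := by
    intro a x hx
    refine map_mem_closure (T a).continuous hx ?_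
    rintro _ ⟨b, hb, rfl⟩
    exact ⟨a * b, by simp [hmul, hb], hTmul _ _ _⟩
  have hηN : ∀ a, T a η - φ a • η ∈ N := by
    intro a
    refine N0.le_topologicalClosure ⟨a + (-φ a) • 1, by simp [hunit], ?_⟩
    rw [hadd, hsmul, hone, neg_smul, sub_eq_add_neg]
  set p := N.starProjection η with hp
  have hpN : p ∈ N := N.starProjection_apply_mem η
  set ξ := η - p with hξ
  have hξorth : ∀ x ∈ N, inner ℂ ξ x = 0 := fun x hx => N.starProjection_inner_eq_zero η x hx
  have hξ0 : ξ ≠ 0 := by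
    intro h0
    have : η = p := sub_eq_zero.mp h0
    have h1 := h 1
    rw [hunit, hone, this, hζ p hpN] at h1
    exact one_ne_zero h1
  have hmem : ∀ a, T a ξ - φ a • ξ ∈ N := by
    intro a
    have : T a ξ - φ a • ξ = (T a η - φ a • η) - (T a p - φ a • p) := by
      rw [hξ, map_sub, smul_sub]; abel
    rw [this]
    exact N.sub_mem (hηN a) (N.sub_mem (hTN a p hpN) (N.smul_mem _ hpN))
  have key : ∀ a, inner ℂ ξ (T a ξ) = φ a * (‖ξ‖ : ℂ) ^ 2 := by
    intro a
    have := hξorth _ (hmem a)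
    rw [inner_sub_right, inner_smul_right, inner_self_eq_norm_sq_to_K, sub_eq_zero] at this
    exact this
  have hn : ‖ξ‖ ≠ 0 := norm_ne_zero_iff.mpr hξ0
  have hn' : (‖ξ‖ : ℂ) ≠ 0 := by exact_mod_cast hn
  refine ⟨((‖ξ‖ : ℂ)⁻¹) • ξ, ?_, ?_⟩
  · rw [norm_smul, norm_inv, Complex.norm_real, norm_norm, inv_mul_cancel₀ hn]
  · intro a
    rw [map_smul, inner_smul_left, inner_smul_right, key]
    simp only [map_inv₀, Complex.conj_ofReal]
    field_simp

/-- **Hoffman–Rossi theorem for `B(H)`.**  Let `A` be a unital σ-weakly closed subalgebra of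
`B(H)` (σ-weak closedness being expressed by separation by σ-weakly continuous functionals),
and let `φ` be a σ-weakly continuous character on `A`, i.e. `φ(a) = Σₙ ⟨a ηₙ, ζₙ⟩` for square
summable sequences `(ηₙ), (ζₙ)`.  Then `φ` has a normal state extension to `B(H)`:
`φ(a) = Σₙ ⟨a ξₙ, ξₙ⟩` on `A` for some sequence `(ξₙ)` with `Σₙ ‖ξₙ‖² = 1`. -/
theorem hoffman_rossi_BH {H : Type*} [NormedAddCommGroup H] [InnerProductSpace ℂ H]
    [CompleteSpace H]
    (A : Subalgebra ℂ (H →L[ℂ] H))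
    (hclosed : ∀ x : H →L[ℂ] H, x ∉ A →
      ∃ η ζ : ℕ → H, Summable (fun n => ‖η n‖ ^ 2) ∧ Summable (fun n => ‖ζ n‖ ^ 2) ∧
        (∀ a ∈ A, (∑' n, (inner ℂ (ζ n) (a (η n)) : ℂ)) = 0) ∧
        (∑' n, (inner ℂ (ζ n) (x (η n)) : ℂ)) ≠ 0)
    (φ : A →ₗ[ℂ] ℂ)
    (hunit : φ 1 = 1)
    (hmul : ∀ a b : A, φ (a * b) = φ a * φ b)
    (hcont : ∃ η ζ : ℕ → H, Summable (fun n => ‖η n‖ ^ 2) ∧ Summable (fun n => ‖ζ n‖ ^ 2) ∧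
      ∀ a : A, φ a = ∑' n, (inner ℂ (ζ n) ((a : H →L[ℂ] H) (η n)) : ℂ)) :
    ∃ ξ : ℕ → H, (∑' n, ‖ξ n‖ ^ 2) = (1 : ℝ) ∧
      ∀ a : A, φ a = ∑' n, (inner ℂ (ξ n) ((a : H →L[ℂ] H) (ξ n)) : ℂ) := by
  obtain ⟨η, ζ, hη, hζ, h⟩ := hcont
  have mem : ∀ f : ℕ → H, Summable (fun n => ‖f n‖ ^ 2) → Memℓp f 2 := by
    intro f hf
    refine memℓp_gen ?_
    simpa using hf
  let T : A → lp (fun _ : ℕ => H) 2 →L[ℂ] lp (fun _ : ℕ => H) 2 := fun a =>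
    lp.mapCLM 2 (fun _ => (a : H →L[ℂ] H)) (K := ‖(a : H →L[ℂ] H)‖) (norm_nonneg _)
      (fun _ => le_rfl)
  have hT : ∀ a x n, T a x n = (a : H →L[ℂ] H) (x n) := fun _ _ _ => rfl
  obtain ⟨ξ, hξ, hφ⟩ := hr_aux T
    (fun a b x => by ext n; simp [hT]) (fun c a x => by ext n; simp [hT])
    (fun x => by ext n; simp [hT]) (fun a b x => by ext n; simp [hT])
    φ hunit hmul ⟨η, mem η hη⟩ ⟨ζ, mem ζ hζ⟩ (fun a => by rw [h a, lp.inner_eq_tsum]; rfl)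
  refine ⟨ξ, ?_, fun a => by rw [hφ a, lp.inner_eq_tsum]; rfl⟩
  have := lp.norm_rpow_eq_tsum (p := 2) (by norm_num) ξ
  rw [hξ] at this
  simpa using this.symm
end

section
/- (Finite-dimensional Hoffman–Rossi theorem.) Let A be a subalgebra of the n×n complex matrices Mₙ(ℂ) containing the identity matrix, and let φ : A → ℂ be a linear map with φ(1) = 1 and φ(xy) = φ(x)φ(y) for all x, y ∈ A. Then there exists a positive semidefinite matrix ρ ∈ Mₙ(ℂ) with trace(ρ) = 1 such that φ(x) = trace(ρ·x) for all x ∈ A. That is, every character on a unital subalgebra of Mₙ(ℂ) extends to a state on Mₙ(ℂ). -/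
open scoped ComplexOrder

set_option synthInstance.maxHeartbeats 1000000
set_option maxHeartbeats 1000000

open Matrix in
lemma hr_proj {n : ℕ} (W : Submodule ℂ (Fin n → ℂ)) (v : Fin n → ℂ) :
    ∃ w ∈ W, ∀ z ∈ W, star (v - w) ⬝ᵥ z = 0 := by
  let K : Submodule ℂ (EuclideanSpace ℂ (Fin n)) :=
    W.comap (WithLp.linearEquiv 2 ℂ (Fin n → ℂ)).toLinearMap
  have h := K.sub_starProjection_mem_orthogonal (WithLp.toLp 2 v)
  have h2 := K.starProjection_apply_mem (WithLp.toLp 2 v)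
  refine ⟨(K.starProjection (WithLp.toLp 2 v)).ofLp, h2, fun z hz => ?_⟩
  have h3 := (Submodule.mem_orthogonal' _ _).1 h (WithLp.toLp 2 z) hz
  rw [EuclideanSpace.inner_eq_star_dotProduct] at h3
  rw [dotProduct_comm]
  exact h3

open Matrix in
lemma hr_unit {n : ℕ} (I : Submodule ℂ (Matrix (Fin n) (Fin n) ℂ))
    (hI : ∀ x ∈ I, ∀ y ∈ I, x * y ∈ I)
    (h : ∀ v : Fin n → ℂ, ∃ r ∈ I, r *ᵥ v = v) : 1 ∈ I := by
  have key : ∀ s : Finset (Fin n), ∃ r ∈ I, ∀ i ∈ s, r *ᵥ (Pi.single i 1) = Pi.single i 1 := by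
    intro s
    induction s using Finset.induction_on with
    | empty => exact ⟨0, I.zero_mem, by simp⟩
    | insert a s ha ih =>
      obtain ⟨r1, h1, h1s⟩ := ih
      obtain ⟨r2, h2, h2s⟩ := h (Pi.single a 1 - r1 *ᵥ Pi.single a 1)
      refine ⟨r1 + r2 - r2 * r1, I.sub_mem (I.add_mem h1 h2) (hI _ h2 _ h1), fun i hi => ?_⟩
      rw [sub_mulVec, add_mulVec, ← mulVec_mulVec]
      rcases Finset.mem_insert.1 hi with rfl | hi
      · rw [mulVec_sub] at h2s
        rw [add_sub_assoc, h2s]; abel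
      · rw [h1s i hi]; abel
  obtain ⟨r, hr, hs⟩ := key Finset.univ
  have : r = 1 := by
    apply Matrix.ext_of_mulVec_single
    intro i
    rw [hs i (Finset.mem_univ _), one_mulVec]
  exact this ▸ hr

open Matrix in
/-- **Finite-dimensional Hoffman–Rossi theorem.**  Every character `φ` on a unital subalgebra
`A` of `Mₙ(ℂ)` extends to a state on `Mₙ(ℂ)`: there is a positive semidefinite `ρ` of trace `1`
(a density matrix) with `φ(x) = tr(ρx)` for all `x ∈ A`. -/
theorem hoffman_rossi_matrix {n : ℕ}
    (A : Subalgebra ℂ (Matrix (Fin n) (Fin n) ℂ))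
    (φ : A →ₗ[ℂ] ℂ)
    (hunit : φ 1 = 1)
    (hmul : ∀ x y : A, φ (x * y) = φ x * φ y) :
    ∃ ρ : Matrix (Fin n) (Fin n) ℂ, ρ.PosSemidef ∧ ρ.trace = 1 ∧
      ∀ x : A, φ x = (ρ * (x : Matrix (Fin n) (Fin n) ℂ)).trace := by
  let I : Submodule ℂ (Matrix (Fin n) (Fin n) ℂ) := (LinearMap.ker φ).map A.val.toLinearMap
  have memI : ∀ x, x ∈ I ↔ ∃ a : A, φ a = 0 ∧ (a : Matrix (Fin n) (Fin n) ℂ) = x := by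
    intro x; exact Iff.rfl
  have hI : ∀ x ∈ I, ∀ y ∈ I, x * y ∈ I := by
    intro x hx y hy
    obtain ⟨a, ha, rfl⟩ := (memI x).1 hx
    obtain ⟨b, hb, rfl⟩ := (memI y).1 hy
    exact (memI _).2 ⟨a * b, by rw [hmul, ha, zero_mul], rfl⟩
  have h1 : (1 : Matrix (Fin n) (Fin n) ℂ) ∉ I := by
    intro h
    obtain ⟨a, ha, h⟩ := (memI 1).1 h
    have : a = 1 := Subtype.ext h
    rw [this, hunit] at ha
    exact one_ne_zero ha
  have hv : ∃ v : Fin n → ℂ, ∀ r ∈ I, r *ᵥ v ≠ v := by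
    by_contra hc
    push Not at hc
    exact h1 (hr_unit I hI hc)
  obtain ⟨v, hv⟩ := hv
  let W : Submodule ℂ (Fin n → ℂ) := I.map ((Matrix.mulVecBilin ℂ ℂ).flip v)
  have memW : ∀ w, w ∈ W ↔ ∃ r ∈ I, r *ᵥ v = w := fun w => Iff.rfl
  obtain ⟨w, hw, horth⟩ := hr_proj W v
  set u := v - w with hu
  have hu0 : u ≠ 0 := by
    intro h0
    obtain ⟨r, hr, h⟩ := (memW w).1 hw
    exact hv r hr (h.trans (sub_eq_zero.1 h0).symm)
  have hc : star u ⬝ᵥ u ≠ 0 := by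
    rwa [Ne, dotProduct_star_self_eq_zero]
  have hx : ∀ x : A, star u ⬝ᵥ ((x : Matrix (Fin n) (Fin n) ℂ) *ᵥ u) = φ x * (star u ⬝ᵥ u) := by
    intro x
    have hm : (x : Matrix (Fin n) (Fin n) ℂ) - φ x • 1 ∈ I :=
      (memI _).2 ⟨x - φ x • 1, by simp [hunit], rfl⟩
    have hz : ((x : Matrix (Fin n) (Fin n) ℂ) - φ x • 1) *ᵥ u ∈ W := by
      rw [hu, mulVec_sub]
      refine W.sub_mem ((memW _).2 ⟨_, hm, rfl⟩) ?_
      obtain ⟨r, hr, rfl⟩ := (memW w).1 hw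
      exact (memW _).2 ⟨_, hI _ hm _ hr, (mulVec_mulVec _ _ _).symm⟩
    have := horth _ hz
    rw [sub_mulVec, smul_mulVec, one_mulVec, dotProduct_sub, dotProduct_smul, smul_eq_mul] at this
    exact sub_eq_zero.1 this
  have htr : ∀ x : A, φ x = (((star u ⬝ᵥ u)⁻¹ • vecMulVec u (star u)) *
      (x : Matrix (Fin n) (Fin n) ℂ)).trace := by
    intro x
    rw [smul_mul, trace_smul, vecMulVec_mul, trace_vecMulVec, dotProduct_comm u,
      ← dotProduct_mulVec, hx, smul_eq_mul]
    field_simp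
  refine ⟨(star u ⬝ᵥ u)⁻¹ • vecMulVec u (star u), ?_, ?_, htr⟩
  · exact (posSemidef_vecMulVec_self_star u).smul (inv_nonneg.2 (dotProduct_star_self_nonneg u))
  · have := htr 1
    rw [hunit] at this
    simpa using this.symm
end

section
/- (Finite-dimensional D-valued Hoffman–Rossi theorem.) Let D ⊆ A ⊆ Mₙ(ℂ), where A is a subalgebra of Mₙ(ℂ) containing the identity matrix, and D is a subalgebra of A containing the identity which is closed under conjugate transpose (a *-subalgebra). Let Φ : A → Mₙ(ℂ) be a linear map with range contained in D such that Φ(xy) = Φ(x)Φ(y) for all x, y ∈ A and Φ(d) = d for all d ∈ D. Then there exists a linear map Ψ : Mₙ(ℂ) → Mₙ(ℂ) with range contained in D such that: Ψ(a) = Φ(a) for all a ∈ A; Ψ(x) is positive semidefinite whenever x ∈ Mₙ(ℂ) is positive semidefinite; Ψ(1) = 1; and Ψ(d·x·d') = d·Ψ(x)·d' for all d, d' ∈ D and x ∈ Mₙ(ℂ). That is, Φ extends to a conditional expectation of Mₙ(ℂ) onto D. -/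
open scoped ComplexOrder

set_option synthInstance.maxHeartbeats 1000000
set_option maxHeartbeats 1000000


namespace HR
open Matrix Polynomial

lemma gen {E : Type*} [NormedAddCommGroup E] [InnerProductSpace ℂ E] [FiniteDimensional ℂ E]
    (W : Submodule ℂ E) : ∃ P : E →ₗ[ℂ] E, (∀ x, P x ∈ W) ∧
      ∀ x, ∀ w ∈ W, inner ℂ w (P x) = inner ℂ w x := by
  refine ⟨(W.starProjection : E →L[ℂ] E).toLinearMap, fun x => ?_, fun x w hw => ?_⟩
  · exact Submodule.starProjection_apply_mem W x
  · have h := W.sub_starProjection_mem_orthogonal x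
    have := (Submodule.mem_orthogonal _ _).1 h w hw
    rw [inner_sub_right, sub_eq_zero] at this
    exact this.symm

variable {n : ℕ}

lemma proj (W : Submodule ℂ (Matrix (Fin n) (Fin n) ℂ)) :
    ∃ P : Matrix (Fin n) (Fin n) ℂ →ₗ[ℂ] Matrix (Fin n) (Fin n) ℂ, (∀ x, P x ∈ W) ∧
      ∀ x, ∀ w ∈ W, (wᴴ * P x).trace = (wᴴ * x).trace := by
  obtain ⟨P, h1, h2⟩ := @gen (Matrix (Fin n) (Fin n) ℂ)
    (Matrix.toMatrixNormedAddCommGroup 1 Matrix.PosDef.one)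
    (Matrix.toMatrixInnerProductSpace 1 Matrix.PosDef.one.posSemidef) inferInstance W
  refine ⟨P, h1, fun x w hw => ?_⟩
  have : (P x * 1 * wᴴ).trace = (x * 1 * wᴴ).trace := h2 x w hw
  rw [trace_mul_comm, trace_mul_comm wᴴ x]
  simpa using this

lemma root_iff (h : Matrix (Fin n) (Fin n) ℂ) (μ : ℂ) :
    μ ∈ spectrum ℂ h ↔ (minpoly ℂ h).IsRoot μ := by
  rw [← Matrix.spectrum_toLin', ← Module.End.hasEigenvalue_iff_mem_spectrum,
    Module.End.hasEigenvalue_iff_isRoot, Matrix.minpoly_toLin']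

lemma tr0 {k : Matrix (Fin n) (Fin n) ℂ} (h : (kᴴ * k).trace = 0) : k = 0 :=
  Matrix.trace_conjTranspose_mul_self_eq_zero_iff.1 h

lemma trnn (k : Matrix (Fin n) (Fin n) ℂ) : 0 ≤ (k * kᴴ).trace :=
  (Matrix.posSemidef_self_mul_conjTranspose k).trace_nonneg

lemma cpos {μ t : ℂ} (h : 0 ≤ μ * t) (ht : 0 < t) : 0 ≤ μ := by
  have h1 := (Complex.lt_def.1 ht).1
  have h2 := (Complex.lt_def.1 ht).2
  have h3 := (Complex.le_def.1 h).1
  have h4 := (Complex.le_def.1 h).2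
  simp only [Complex.zero_re, Complex.zero_im, Complex.mul_re, Complex.mul_im] at h1 h2 h3 h4
  rw [← h2] at h3 h4
  simp only [mul_zero, zero_add, sub_zero] at h3 h4
  refine Complex.le_def.2 ⟨nonneg_of_mul_nonneg_left h3 h1, ?_⟩
  rcases mul_eq_zero.1 h4.symm with h | h
  · simp [h]
  · exact absurd h h1.ne'

lemma pos (S : Subalgebra ℂ (Matrix (Fin n) (Fin n) ℂ)) (hS : ∀ d ∈ S, star d ∈ S)
    (h : Matrix (Fin n) (Fin n) ℂ) (hh : h ∈ S)
    (hp : ∀ s ∈ S, 0 ≤ (h * (sᴴ * s)).trace) : h.PosSemidef := by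
  have herm : h.IsHermitian := by
    have hk : ∀ s ∈ S, ((h - hᴴ) * (sᴴ * s)).trace = 0 := by
      intro s hs
      have h1 := (IsSelfAdjoint.of_nonneg (hp s hs)).star_eq
      rw [← Matrix.trace_conjTranspose, conjTranspose_mul, conjTranspose_mul,
        conjTranspose_conjTranspose, trace_mul_comm] at h1
      rw [sub_mul, trace_sub, h1, sub_self]
    set k := h - hᴴ with hkdef
    have hks : kᴴ = -k := by simp [hkdef]
    have hkS : k ∈ S := S.sub_mem hh (hS h hh)
    have e1 := hk (1 + Complex.I • k) (S.add_mem S.one_mem (S.smul_mem hkS _))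
    have e2 := hk (1 - Complex.I • k) (S.sub_mem S.one_mem (S.smul_mem hkS _))
    have e3 : (kᴴ * k).trace = 0 := by
      simp only [conjTranspose_add, conjTranspose_sub, conjTranspose_one, conjTranspose_smul, hks,
        Complex.star_def, Complex.conj_I, smul_neg, neg_smul, neg_neg, mul_add, add_mul, mul_sub,
        sub_mul, mul_one, one_mul, trace_add, trace_sub, mul_smul_comm, smul_mul_assoc,
        trace_smul, trace_neg, neg_mul, smul_eq_mul] at e1 e2 ⊢
      have h4 : (4 * Complex.I) * (k * k).trace = 0 := by linear_combination e1 - e2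
      simpa using h4
    have := tr0 e3
    exact (sub_eq_zero.1 this).symm
  rw [herm.posSemidef_iff_eigenvalues_nonneg]
  intro i
  have hmem : ((herm.eigenvalues i : ℝ) : ℂ) ∈ spectrum ℂ h := by
    rw [herm.spectrum_eq_image_range]
    exact ⟨_, ⟨i, rfl⟩, rfl⟩
  rw [root_iff] at hmem
  obtain ⟨q, hq⟩ := Polynomial.dvd_iff_isRoot.2 hmem
  set μ : ℂ := ((herm.eigenvalues i : ℝ) : ℂ) with hμ
  have hint : IsIntegral ℂ h := Algebra.IsIntegral.isIntegral h
  have hqm : q.Monic := (monic_X_sub_C μ).of_mul_monic_left (hq ▸ minpoly.monic hint)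
  have hs0 : aeval h q ≠ 0 := by
    refine minpoly.aeval_ne_zero_of_dvdNotUnit_minpoly hint hqm
      ⟨hqm.ne_zero, X - C μ, not_isUnit_X_sub_C μ, by rw [hq, mul_comm]⟩
  have hsS : aeval h q ∈ S := by
    have := (aeval (⟨h, hh⟩ : S) q).2
    rwa [← Subalgebra.coe_val, ← Polynomial.aeval_algHom_apply] at this
  have heig : h * aeval h q = μ • aeval h q := by
    have := minpoly.aeval ℂ h
    rw [hq, map_mul] at this
    simp only [map_sub, aeval_X, aeval_C, sub_mul, sub_eq_zero] at this
    rw [this, Algebra.smul_def]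
  set s := aeval h q
  have h1 := hp sᴴ (hS s hsS)
  rw [conjTranspose_conjTranspose, ← mul_assoc, heig, smul_mul_assoc, trace_smul, smul_eq_mul] at h1
  have h2 : 0 < (s * sᴴ).trace := by
    refine lt_of_le_of_ne (trnn s) fun h0 => hs0 ?_
    rw [trace_mul_comm] at h0
    exact tr0 h0.symm
  have h3 : 0 ≤ μ := by
    exact cpos h1 h2
  simpa [hμ] using h3

lemma retr (A : Subalgebra ℂ (Matrix (Fin n) (Fin n) ℂ))
    (φ : A →ₐ[ℂ] Matrix (Fin n) (Fin n) ℂ) (a : A)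
    (ha : ((a : Matrix (Fin n) (Fin n) ℂ) + (a : Matrix (Fin n) (Fin n) ℂ)ᴴ).PosSemidef) :
    0 ≤ (φ a).trace.re := by
  rw [trace_eq_sum_roots_charpoly]
  rw [← Complex.coe_reAddGroupHom, map_multiset_sum]
  apply Multiset.sum_nonneg
  intro r hr
  obtain ⟨μ, hμ, rfl⟩ := Multiset.mem_map.1 hr
  have h1 := isRoot_of_mem_roots hμ
  rw [← Matrix.mem_spectrum_iff_isRoot_charpoly, root_iff] at h1
  have h2 : minpoly ℂ (φ a) ∣ minpoly ℂ (a : Matrix (Fin n) (Fin n) ℂ) := by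
    apply minpoly.dvd
    rw [Polynomial.aeval_algHom_apply]
    have h3 := minpoly.aeval ℂ (a : Matrix (Fin n) (Fin n) ℂ)
    rw [← Subalgebra.coe_val, Polynomial.aeval_algHom_apply] at h3
    rw [Subalgebra.coe_val] at h3
    rw [show aeval a (minpoly ℂ (a : Matrix (Fin n) (Fin n) ℂ)) = 0 from Subtype.ext h3, map_zero]
  have h3 := h1.dvd h2
  rw [← Matrix.minpoly_toLin', ← Module.End.hasEigenvalue_iff_isRoot] at h3
  obtain ⟨v, hv⟩ := h3.exists_hasEigenvector
  have hv1 : (a : Matrix (Fin n) (Fin n) ℂ) *ᵥ v = μ • v := by simpa using hv.apply_eq_smul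
  have h4 := ha.dotProduct_mulVec_nonneg v
  have h5 : star v ⬝ᵥ ((a : Matrix (Fin n) (Fin n) ℂ)ᴴ *ᵥ v) = star μ * (star v ⬝ᵥ v) := by
    rw [dotProduct_mulVec, ← star_mulVec, hv1, star_smul, smul_dotProduct, smul_eq_mul]
  rw [add_mulVec, dotProduct_add, h5, hv1, dotProduct_smul, smul_eq_mul, ← add_mul] at h4
  have h6 : 0 < star v ⬝ᵥ v := dotProduct_star_self_pos_iff.2 hv.2
  have h7 := cpos h4 h6
  have h8 := (Complex.le_def.1 h7).1
  simp at h8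
  simpa using h8

open scoped MatrixOrder Matrix.Norms.L2Operator in
lemma bdd (h : Matrix (Fin n) (Fin n) ℂ) (hh : h.IsHermitian) :
    ∃ t : ℝ, ((t : ℂ) • (1 : Matrix (Fin n) (Fin n) ℂ) + h).PosSemidef := by
  have h1 : IsSelfAdjoint h := hh
  have := h1.neg_algebraMap_norm_le_self
  refine ⟨‖h‖, ?_⟩
  rw [← Matrix.nonneg_iff_posSemidef]
  rw [neg_le_iff_add_nonneg'] at this
  convert this using 2
  rw [Algebra.algebraMap_eq_smul_one]
  ext i j
  simp

lemma ext (A : Subalgebra ℂ (Matrix (Fin n) (Fin n) ℂ))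
    (φ : A →ₐ[ℂ] Matrix (Fin n) (Fin n) ℂ) :
    ∃ ω : Matrix (Fin n) (Fin n) ℂ →ₗ[ℂ] ℂ, (∀ a : A, ω a = (φ a).trace) ∧
      ∀ x : Matrix (Fin n) (Fin n) ℂ, x.PosSemidef → 0 ≤ ω x := by
  let s : PointedCone ℝ (Matrix (Fin n) (Fin n) ℂ) :=
    { carrier := {x | (x + xᴴ).PosSemidef}
      add_mem' := by
        intro x y hx hy
        have := Matrix.PosSemidef.add hx hy
        simp only [Set.mem_ofPred_eq, conjTranspose_add]
        convert this using 1
        abel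
      zero_mem' := by simp [Matrix.PosSemidef.zero]
      smul_mem' := by
        intro c x hx
        have h1 : (x + xᴴ).PosSemidef := hx
        have h2 : (0 : ℂ) ≤ ((c : ℝ) : ℂ) := by exact_mod_cast c.2
        have := h1.smul h2
        simp only [Set.mem_ofPred_eq]
        convert this using 1
        ext i j
        have e : ∀ z : ℂ, c • z = ((c : ℝ) : ℂ) * z := fun z => rfl
        simp [Matrix.add_apply, e, mul_add] }
  have smem : ∀ x, x ∈ s ↔ (x + xᴴ).PosSemidef := fun x => Iff.rfl
  let f : Matrix (Fin n) (Fin n) ℂ →ₗ.[ℝ] ℝ :=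
    { domain := A.toSubmodule.restrictScalars ℝ
      toFun := (Complex.reLm ∘ₗ (Matrix.traceLinearMap (Fin n) ℂ ℂ).restrictScalars ℝ ∘ₗ
        φ.toLinearMap.restrictScalars ℝ : A →ₗ[ℝ] ℝ) }
  have hf : ∀ (x) (hx : x ∈ A), f ⟨x, hx⟩ = (φ ⟨x, hx⟩).trace.re := fun x hx => rfl
  obtain ⟨g, hg1, hg2⟩ := riesz_extension s f
    (by
      rintro ⟨x, hx⟩ hxs
      rw [hf x hx]
      exact retr A φ ⟨x, hx⟩ hxs)
    (by
      intro y
      obtain ⟨t, ht⟩ := bdd (y + yᴴ) (Matrix.isHermitian_add_transpose_self y)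
      refine ⟨⟨((t / 2 : ℝ) : ℂ) • 1, A.smul_mem A.one_mem _⟩, ?_⟩
      rw [smem]
      convert ht using 1
      ext i j
      simp [Matrix.one_apply]
      split_ifs <;> simp [Complex.ext_iff] <;> ring)
  have hgA : ∀ (x) (hx : x ∈ A), g x = (φ ⟨x, hx⟩).trace.re := fun x hx => hg1 ⟨x, hx⟩
  have hsk : ∀ x : Matrix (Fin n) (Fin n) ℂ, xᴴ = -x → g x = 0 := by
    intro x hx
    have h1 := hg2 x (by rw [smem, hx]; simp [Matrix.PosSemidef.zero])
    have h2 := hg2 (-x) (by rw [smem]; simp [hx, Matrix.PosSemidef.zero])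
    rw [map_neg] at h2
    linarith
  have hI : ∀ x : Matrix (Fin n) (Fin n) ℂ, ∀ c : ℂ, g (c • x) = c.re * g x + c.im * g (Complex.I • x) := by
    intro x c
    have : c • x = c.re • x + c.im • (Complex.I • x) := by
      ext i j
      simp [Complex.ext_iff, sub_eq_add_neg]
    rw [this, map_add, map_smul, map_smul, smul_eq_mul, smul_eq_mul]
  refine ⟨{ toFun := fun x => (g x : ℂ) - Complex.I * (g (Complex.I • x) : ℂ)
            map_add' := ?_
            map_smul' := ?_ }, ?_, ?_⟩
  · intro x y
    simp only [smul_add, map_add]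
    push_cast
    ring
  · intro c x
    simp only [RingHom.id_apply]
    rw [hI, smul_smul, hI x (Complex.I * c)]
    simp [Complex.ext_iff]
  · rintro ⟨a, ha⟩
    simp only [LinearMap.coe_mk, AddHom.coe_mk]
    rw [hgA a ha, hgA _ (A.smul_mem ha _)]
    have : φ ⟨Complex.I • a, A.smul_mem ha _⟩ = Complex.I • φ ⟨a, ha⟩ := map_smul φ Complex.I ⟨a, ha⟩
    rw [this, trace_smul]
    simp [Complex.ext_iff]
  · intro x hx
    simp only [LinearMap.coe_mk, AddHom.coe_mk]
    rw [hsk (Complex.I • x) (by simp [hx.1.eq])]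
    have : 0 ≤ g x := hg2 x (by rw [smem, hx.1.eq]; exact hx.add hx)
    simpa using this

end HR

namespace HR
open Matrix

lemma uniq {n : ℕ} (D : Subalgebra ℂ (Matrix (Fin n) (Fin n) ℂ)) (hstar : ∀ d ∈ D, star d ∈ D)
    {y z : Matrix (Fin n) (Fin n) ℂ} (hy : y ∈ D) (hz : z ∈ D)
    (h : ∀ d ∈ D, (y * d).trace = (z * d).trace) : y = z := by
  have h1 := h (y - z)ᴴ (hstar _ (D.sub_mem hy hz))
  rw [← sub_eq_zero, ← trace_sub, ← sub_mul, trace_mul_comm] at h1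
  exact sub_eq_zero.1 (tr0 h1)

lemma repr {n : ℕ} (ω : Matrix (Fin n) (Fin n) ℂ →ₗ[ℂ] ℂ) :
    ∃ ρ : Matrix (Fin n) (Fin n) ℂ, ∀ x, ω x = (ρ * x).trace := by
  refine ⟨Matrix.of fun i j => ω (Matrix.single j i 1), fun x => ?_⟩
  conv_lhs => rw [Matrix.matrix_eq_sum_single x]
  simp only [map_sum, trace, diag_apply, mul_apply, of_apply]
  rw [Finset.sum_comm]
  refine Finset.sum_congr rfl fun i _ => Finset.sum_congr rfl fun j _ => ?_
  have : Matrix.single j i (x j i) = x j i • Matrix.single j i (1 : ℂ) := by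
    simp [Matrix.smul_single]
  rw [this, map_smul, smul_eq_mul, mul_comm]

lemma central {n : ℕ} (D A : Subalgebra ℂ (Matrix (Fin n) (Fin n) ℂ))
    (hDA : D ≤ A) (hstar : ∀ d ∈ D, star d ∈ D)
    (ω : Matrix (Fin n) (Fin n) ℂ →ₗ[ℂ] ℂ)
    (hω : ∀ x : Matrix (Fin n) (Fin n) ℂ, x.PosSemidef → 0 ≤ ω x)
    (hc : ∀ d ∈ D, ∀ a ∈ A, ω (d * a) = ω (a * d)) :
    ∃ ω' : Matrix (Fin n) (Fin n) ℂ →ₗ[ℂ] ℂ,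
      (∀ x : Matrix (Fin n) (Fin n) ℂ, x.PosSemidef → 0 ≤ ω' x) ∧
      (∀ d ∈ D, ∀ x, ω' (d * x) = ω' (x * d)) ∧ ∀ a ∈ A, ω' a = ω a := by
  let S := Subalgebra.centralizer ℂ (D : Set (Matrix (Fin n) (Fin n) ℂ))
  have hSm : ∀ s, s ∈ S ↔ ∀ d ∈ D, d * s = s * d := fun s => Subalgebra.mem_centralizer_iff ℂ
  have hS : ∀ s ∈ S, star s ∈ S := by
    intro s hs
    rw [hSm] at hs ⊢
    intro d hd
    have := congrArg star (hs (star d) (hstar d hd))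
    simpa using this.symm
  obtain ⟨E, hE1, hE2⟩ := proj (Subalgebra.toSubmodule S)
  have hE1 : ∀ x, E x ∈ S := hE1
  have hE2 : ∀ x, ∀ s ∈ S, (sᴴ * E x).trace = (sᴴ * x).trace := hE2
  have hEp : ∀ x : Matrix (Fin n) (Fin n) ℂ, x.PosSemidef → (E x).PosSemidef := by
    intro x hx
    refine pos S hS _ (hE1 x) fun s hs => ?_
    have h1 := hE2 x (sᴴ * s) (S.mul_mem (hS s hs) hs)
    rw [conjTranspose_mul, conjTranspose_conjTranspose] at h1
    rw [trace_mul_comm, h1, mul_assoc, trace_mul_comm]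
    exact (hx.mul_mul_conjTranspose_same s).trace_nonneg
  have hEc : ∀ d ∈ D, ∀ x, E (d * x - x * d) = 0 := by
    intro d hd x
    apply tr0
    rw [hE2 _ _ (hE1 _)]
    have hs : (E (d * x - x * d))ᴴ ∈ S := hS _ (hE1 _)
    set s := (E (d * x - x * d))ᴴ
    rw [mul_sub, trace_sub, ← mul_assoc, ← (hSm s).1 hs d hd, mul_assoc, trace_mul_comm d,
      mul_assoc, sub_self]
  have hEi : ∀ s ∈ S, E s = s := by
    intro s hs
    have h0 : E s - s ∈ S := S.sub_mem (hE1 s) hs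
    refine sub_eq_zero.1 (tr0 ?_)
    conv_lhs => rw [mul_sub, trace_sub]
    rw [hE2 s _ h0, sub_self]
  refine ⟨ω ∘ₗ E, fun x hx => hω _ (hEp x hx), fun d hd x => ?_, fun a ha => ?_⟩
  · have := congrArg ω (hEc d hd x)
    rw [map_sub, map_sub, map_zero, sub_eq_zero] at this
    exact this
  · let T : Set (Matrix (Fin n) (Fin n) ℂ) := {w | ∃ d ∈ D, ∃ b ∈ A, w = d * b - b * d}
    let W := Submodule.span ℂ T
    have hWA : W ≤ Subalgebra.toSubmodule A := Submodule.span_le.2 (by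
      rintro _ ⟨d, hd, b, hb, rfl⟩
      exact A.sub_mem (A.mul_mem (hDA hd) hb) (A.mul_mem hb (hDA hd)))
    have hW1 : W ≤ LinearMap.ker ω := Submodule.span_le.2 (by
      rintro _ ⟨d, hd, b, hb, rfl⟩
      simp [hc d hd b hb])
    have hW2 : W ≤ LinearMap.ker E := Submodule.span_le.2 (by
      rintro _ ⟨d, hd, b, hb, rfl⟩
      exact hEc d hd b)
    obtain ⟨P, hP1, hP2⟩ := proj W
    have hb : a - P a ∈ A := A.sub_mem ha (hWA (hP1 a))
    have hbS : a - P a ∈ S := by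
      rw [hSm]
      intro d hd
      refine sub_eq_zero.1 (tr0 ?_)
      set b := a - P a with hbd
      have hk : d * b - b * d ∈ A := A.sub_mem (A.mul_mem (hDA hd) hb) (A.mul_mem hb (hDA hd))
      set k := d * b - b * d with hkd
      have h1 := hP2 a (star d * k - k * star d)
        (Submodule.subset_span ⟨star d, hstar d hd, k, hk, rfl⟩)
      have h2 : ((star d * k - k * star d)ᴴ * b).trace = 0 := by
        rw [hbd, mul_sub, trace_sub, h1, sub_self]
      have h3 : (star d * k - k * star d)ᴴ = kᴴ * d - d * kᴴ := by
        simp [star_eq_conjTranspose, conjTranspose_mul]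
      have h4 : ∀ l b : Matrix (Fin n) (Fin n) ℂ,
          (l * (d * b - b * d)).trace = ((l * d - d * l) * b).trace := by
        intro l b
        rw [mul_sub, sub_mul, trace_sub, trace_sub, mul_assoc l d b, ← mul_assoc l b d,
          trace_mul_comm (l * b) d, mul_assoc d l b]
      rw [h3, ← h4] at h2
      exact h2
    have h3 : E (P a) = 0 := hW2 (hP1 a)
    have h4 : ω (P a) = 0 := hW1 (hP1 a)
    have h5 := hEi _ hbS
    rw [map_sub, h3, sub_zero] at h5
    rw [LinearMap.comp_apply, h5, map_sub, h4, sub_zero]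

end HR

/-- **Finite-dimensional `D`-valued Hoffman–Rossi theorem.**  Let `D ⊆ A ⊆ Mₙ(ℂ)` where `A` is
a unital subalgebra and `D` a unital `*`-subalgebra contained in `A`.  Every homomorphism
`Φ : A → D` restricting to the identity on `D` extends to a conditional expectation
`Ψ : Mₙ(ℂ) → D`: a positive unital linear map onto `D` extending `Φ` which is a
`D`-bimodule map. -/
theorem hoffman_rossi_matrix_D_valued {n : ℕ}
    (D A : Subalgebra ℂ (Matrix (Fin n) (Fin n) ℂ))
    (hDA : D ≤ A)
    (hstar : ∀ d ∈ D, star d ∈ D)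
    (Φ : A →ₗ[ℂ] Matrix (Fin n) (Fin n) ℂ)
    (hrange : ∀ a : A, Φ a ∈ D)
    (hmul : ∀ x y : A, Φ (x * y) = Φ x * Φ y)
    (hid : ∀ d (hd : d ∈ D), Φ ⟨d, hDA hd⟩ = d) :
    ∃ Ψ : Matrix (Fin n) (Fin n) ℂ →ₗ[ℂ] Matrix (Fin n) (Fin n) ℂ,
      (∀ x, Ψ x ∈ D) ∧
      (∀ a : A, Ψ (a : Matrix (Fin n) (Fin n) ℂ) = Φ a) ∧
      (∀ x : Matrix (Fin n) (Fin n) ℂ, x.PosSemidef → (Ψ x).PosSemidef) ∧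
      Ψ 1 = 1 ∧
      (∀ d d' x : Matrix (Fin n) (Fin n) ℂ, d ∈ D → d' ∈ D →
        Ψ (d * x * d') = d * Ψ x * d') := by
  have h1A : Φ 1 = 1 := hid 1 D.one_mem
  let φ : A →ₐ[ℂ] Matrix (Fin n) (Fin n) ℂ := AlgHom.ofLinearMap Φ h1A hmul
  have hφ : ∀ a, φ a = Φ a := fun a => rfl
  obtain ⟨ω, hω1, hω2⟩ := HR.ext A φ
  have hl : ∀ (d) (hd : d ∈ D) (a : A), Φ (⟨d, hDA hd⟩ * a) = d * Φ a := fun d hd a => by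
    rw [hmul, hid d hd]
  have hr : ∀ (d) (hd : d ∈ D) (a : A), Φ (a * ⟨d, hDA hd⟩) = Φ a * d := fun d hd a => by
    rw [hmul, hid d hd]
  obtain ⟨ω', hp, hc, he⟩ := HR.central D A hDA hstar ω hω2 (by
    intro d hd a ha
    have h1 := hω1 (⟨d, hDA hd⟩ * ⟨a, ha⟩)
    have h2 := hω1 (⟨a, ha⟩ * ⟨d, hDA hd⟩)
    rw [hφ, hl d hd] at h1
    rw [hφ, hr d hd] at h2
    simp only [MulMemClass.mk_mul_mk] at h1 h2
    rw [h1, h2, Matrix.trace_mul_comm])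
  obtain ⟨ρ, hρ⟩ := HR.repr ω'
  obtain ⟨E, hE1, hE2⟩ := HR.proj (Subalgebra.toSubmodule D)
  have hE1 : ∀ x, E x ∈ D := hE1
  have hE3 : ∀ x, ∀ d ∈ D, (E x * d).trace = (x * d).trace := by
    intro x d hd
    have := hE2 x (star d) (hstar d hd)
    rw [← Matrix.star_eq_conjTranspose, star_star] at this
    rw [Matrix.trace_mul_comm, this, Matrix.trace_mul_comm]
  have key : ∀ x, ∀ d ∈ D, (E (ρ * x) * d).trace = ω' (x * d) := by
    intro x d hd
    rw [hE3 _ d hd, hρ, mul_assoc]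
  have hΨA : ∀ a : A, E (ρ * (a : Matrix (Fin n) (Fin n) ℂ)) = Φ a := by
    intro a
    refine HR.uniq D hstar (hE1 _) (hrange a) fun d hd => ?_
    rw [key _ d hd, he _ (A.mul_mem a.2 (hDA hd)), ← hr d hd a]
    exact hω1 (a * ⟨d, hDA hd⟩)
  refine ⟨E ∘ₗ LinearMap.mulLeft ℂ ρ, fun x => hE1 _, hΨA, fun x hx => ?_, ?_, ?_⟩
  · refine HR.pos D hstar _ (hE1 _) fun d hd => ?_
    rw [LinearMap.comp_apply, LinearMap.mulLeft_apply, ← Matrix.star_eq_conjTranspose, key _ _ (D.mul_mem (hstar d hd) hd),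
      ← mul_assoc, ← hc d hd, ← mul_assoc]
    exact hp _ (hx.mul_mul_conjTranspose_same d)
  · have := hΨA 1
    rw [h1A] at this
    exact this
  · intro d d' x hd hd'
    refine HR.uniq D hstar (hE1 _) (D.mul_mem (D.mul_mem hd (hE1 _)) hd') fun e he => ?_
    simp only [LinearMap.comp_apply, LinearMap.mulLeft_apply]
    rw [key _ e he, mul_assoc, mul_assoc, hc d hd, mul_assoc d, mul_assoc d, Matrix.trace_mul_comm d,
      mul_assoc (E _), mul_assoc (E _), key _ _ (D.mul_mem (D.mul_mem hd' he) hd), mul_assoc x]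
end

section
/- (Failure of the Hoffman–Rossi theorem for non-selfadjoint range.) Let L^∞ = L^∞([0,1]; ℂ) with Lebesgue measure, let 1 denote the constant function 1 and T the identity function t ↦ t in L^∞, and let M = M₂(L^∞) be the algebra of 2×2 matrices with entries in L^∞. Then there is no linear map R : M₂(L^∞) → M₂(ℂ) satisfying all three of the following: (i) R is positive, i.e. R(y*·y) is a positive semidefinite matrix for every y ∈ M₂(L^∞), where y* is the conjugate-transpose (entrywise complex conjugate and transpose); (ii) R extends the homomorphism Φ, i.e. for all λ, μ, a, b ∈ ℂ, R of the upper-triangular matrix with (1,1) entry λ·1, (1,2) entry a·1 + b·T, (2,1) entry 0, and (2,2) entry μ·1, equals the matrix with entries ((λ, a + b), (0, μ)); (iii) the (1,2)-corner functional of R is weak*-continuous, i.e. there exists g ∈ L¹([0,1]; ℂ) such that for every x ∈ L^∞, the (1,2) entry of R applied to the matrix with (1,2) entry x and all other entries 0 equals ∫_{[0,1]} x·g dt. -/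
open MeasureTheory
open scoped ComplexOrder

set_option synthInstance.maxHeartbeats 1000000
set_option maxHeartbeats 1000000

/-- Lebesgue measure on `[0,1]`. -/
noncomputable def lebesgue01 : Measure ℝ := volume.restrict (Set.Icc (0:ℝ) 1)

lemma hr_offdiag (N : Matrix (Fin 2) (Fin 2) ℂ) (h : N.PosSemidef) :
    2 * ‖N 0 1‖ ≤ (N 0 0).re + (N 1 1).re := by
  have hd := h.det_nonneg
  have h0 : 0 ≤ N 0 0 := h.diag_nonneg
  have h1 : 0 ≤ N 1 1 := h.diag_nonneg
  have h10 : N 1 0 = star (N 0 1) := (h.1.apply 1 0).symm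
  rw [Matrix.det_fin_two, h10] at hd
  rw [Complex.nonneg_iff] at h0 h1 hd
  have hsq : ‖N 0 1‖ ^ 2 = (N 0 1).re ^ 2 + (N 0 1).im ^ 2 := by
    rw [← Complex.normSq_eq_norm_sq, Complex.normSq_apply]; ring
  have hd1 := hd.1
  simp only [Complex.sub_re, Complex.mul_re, Complex.star_def, Complex.conj_re,
    Complex.conj_im, ← h0.2, ← h1.2] at hd1
  have := norm_nonneg (N 0 1)
  refine abs_le_of_sq_le_sq' ?_ (by linarith [h0.1, h1.1]) |>.2
  nlinarith [sq_nonneg ((N 0 0).re - (N 1 1).re)]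

lemma hr_factor (u : ℝ → ℂ) (hu : ∀ t, ‖u t‖ ≤ 1) :
    star (!![1, u; 0, fun t => ((Real.sqrt (1 - ‖u t‖ ^ 2) : ℝ) : ℂ)] :
      Matrix (Fin 2) (Fin 2) (ℝ → ℂ)) *
      !![1, u; 0, fun t => ((Real.sqrt (1 - ‖u t‖ ^ 2) : ℝ) : ℂ)] = !![1, u; star u, 1] := by
  ext i j t
  fin_cases i <;> fin_cases j <;> simp [Matrix.mul_apply, Fin.sum_univ_two, Matrix.star_apply]
  rw [← Complex.ofReal_mul, Real.mul_self_sqrt (by have := hu t; have := norm_nonneg (u t); nlinarith),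
    ← Complex.normSq_eq_conj_mul_self, Complex.normSq_eq_norm_sq]
  push_cast
  ring

section
variable (R : Matrix (Fin 2) (Fin 2) (ℝ → ℂ) →ₗ[ℂ] Matrix (Fin 2) (Fin 2) ℂ)
  (hpos : ∀ y : Matrix (Fin 2) (Fin 2) (ℝ → ℂ),
          (∀ i j, MemLp (y i j) ⊤ lebesgue01) → (R (star y * y)).PosSemidef)
  (hext : ∀ lam mu a b : ℂ,
          R !![fun _ => lam, fun t : ℝ => a + b * (t : ℂ); 0, fun _ => mu]
            = !![lam, a + b; 0, mu])

lemma hr_fin : IsFiniteMeasure lebesgue01 := by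
  unfold lebesgue01; infer_instance

include hpos in
lemma hr_psd (u : ℝ → ℂ) (hm : Measurable u) (hu : ∀ t, ‖u t‖ ≤ 1) :
    (R !![1, u; star u, 1]).PosSemidef := by
  rw [← hr_factor u hu]
  apply hpos
  have := hr_fin
  intro i j
  have key : ∀ f : ℝ → ℂ, Measurable f → (∀ t, ‖f t‖ ≤ 1) → MemLp f ⊤ lebesgue01 :=
    fun f hf hb => memLp_top_of_bound hf.aestronglyMeasurable 1 (Filter.Eventually.of_forall hb)
  fin_cases i <;> fin_cases j
  · exact key 1 measurable_one (by simp)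
  · exact key u hm hu
  · exact key 0 measurable_zero (by simp)
  · refine key (fun t => ((Real.sqrt (1 - ‖u t‖ ^ 2) : ℝ) : ℂ)) (by fun_prop) ?_
    intro t
    rw [Complex.norm_real, Real.norm_of_nonneg (Real.sqrt_nonneg _)]
    exact Real.sqrt_le_one.2 (by have := sq_nonneg ‖u t‖; linarith)

include hpos hext in
lemma hr_K (u : ℝ → ℂ) (hm : Measurable u) (hu : ∀ t, ‖u t‖ ≤ 1) :
    ‖R !![0, u; star u, 0] 0 1‖ ≤ 1 := by
  have h1 := hr_offdiag _ (hr_psd R hpos u hm hu)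
  have h2 := hr_offdiag _ (hr_psd R hpos (-u) hm.neg (by simpa using hu))
  have hI : R !![1, 0; 0, 1] = !![1, 0; 0, 1] := by
    have := hext 1 1 0 0
    simp only [zero_mul, add_zero] at this
    exact this
  have e1 : (!![1, u; star u, 1] : Matrix (Fin 2) (Fin 2) (ℝ → ℂ)) =
      !![1, 0; 0, 1] + !![0, u; star u, 0] := by
    ext i j; fin_cases i <;> fin_cases j <;> simp
  have e2 : (!![1, -u; star (-u), 1] : Matrix (Fin 2) (Fin 2) (ℝ → ℂ)) =
      !![1, 0; 0, 1] - !![0, u; star u, 0] := by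
    ext i j; fin_cases i <;> fin_cases j <;> simp
  rw [e1, map_add, hI] at h1
  rw [e2, map_sub, hI] at h2
  simp at h1 h2
  linarith

include hpos hext in
lemma hr_phi (u : ℝ → ℂ) (hm : Measurable u) (hu : ∀ t, ‖u t‖ ≤ 1) :
    ‖R !![0, u; 0, 0] 0 1‖ ≤ 1 := by
  have h1 := hr_K R hpos hext u hm hu
  have h2 := hr_K R hpos hext (Complex.I • u) (hm.const_smul _) (by simpa using hu)
  have e : (!![0, u; 0, 0] : Matrix (Fin 2) (Fin 2) (ℝ → ℂ)) =
      (1 / 2 : ℂ) • (!![0, u; star u, 0] -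
        Complex.I • !![0, Complex.I • u; star (Complex.I • u), 0]) := by
    ext i j t
    fin_cases i <;> fin_cases j <;> simp [← mul_assoc]
    ring
  rw [e, map_smul, map_sub, map_smul]
  simp only [Matrix.smul_apply, Matrix.sub_apply, smul_eq_mul, norm_mul]
  have h3 := norm_sub_le (R !![0, u; star u, 0] 0 1)
    (Complex.I * R !![0, Complex.I • u; star (Complex.I • u), 0] 0 1)
  rw [norm_mul, Complex.norm_I, one_mul] at h3
  have h4 : ‖(1 / 2 : ℂ)‖ = 1 / 2 := by norm_num
  rw [h4]
  linarith

end

lemma hr_z (z : ℂ) (h1 : ‖1 + z‖ ≤ 1) (h2 : ‖1 - z‖ ≤ 1) : z = 0 := by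
  have := parallelogram_law_with_norm ℝ (1 : ℂ) z
  rw [norm_one] at this
  have h3 := norm_nonneg (1 + z)
  have h4 := norm_nonneg (1 - z)
  have h5 := norm_nonneg z
  have : ‖z‖ = 0 := by nlinarith
  simpa using this

/-- **Failure of the Hoffman–Rossi theorem for non-selfadjoint range.**  With
`L^∞ = L^∞([0,1]; ℂ)` realized by functions, `1` the constant function and `T : t ↦ t`, there
is no linear map `R : M₂(L^∞) → M₂(ℂ)` which (i) is positive, i.e. sends elements `y*·y` with
essentially bounded measurable entries to positive semidefinite matrices, (ii) extends the
homomorphism `Φ` of `evaluation at 1` on upper-triangular matrices with scalar diagonal and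
`(1,2)` entry in `span{1, T}`, and (iii) has weak*-continuous `(1,2)`-corner functional, i.e.
given on the `(1,2)` corner by integration against some `g ∈ L¹([0,1]; ℂ)`. -/
theorem no_positive_weakstar_extension_nonselfadjoint_range :
    ¬ ∃ R : Matrix (Fin 2) (Fin 2) (ℝ → ℂ) →ₗ[ℂ] Matrix (Fin 2) (Fin 2) ℂ,
        (∀ y : Matrix (Fin 2) (Fin 2) (ℝ → ℂ),
          (∀ i j, MemLp (y i j) ⊤ lebesgue01) → (R (star y * y)).PosSemidef) ∧
        (∀ lam mu a b : ℂ,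
          R !![fun _ => lam, fun t : ℝ => a + b * (t : ℂ); 0, fun _ => mu]
            = !![lam, a + b; 0, mu]) ∧
        (∃ g : ℝ → ℂ, Integrable g lebesgue01 ∧
          ∀ x : ℝ → ℂ, MemLp x ⊤ lebesgue01 →
            R !![0, x; 0, 0] 0 1 = ∫ t, x t * g t ∂lebesgue01) := by
  rintro ⟨R, hpos, hext, g, hg, hR⟩
  have := hr_fin
  have hmem : ∀ᵐ t ∂lebesgue01, t ∈ Set.Icc (0:ℝ) 1 :=
    ae_restrict_mem measurableSet_Icc
  have htop : ∀ f : ℝ → ℂ, Measurable f → (∀ t ∈ Set.Icc (0:ℝ) 1, ‖f t‖ ≤ 1) →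
      MemLp f ⊤ lebesgue01 := fun f hf hb =>
    memLp_top_of_bound hf.aestronglyMeasurable 1 (hmem.mono hb)
  have hT : MemLp (fun t : ℝ => (t : ℂ)) ⊤ lebesgue01 := htop _ (by fun_prop) (by
    intro t ht
    rw [Complex.norm_real, Real.norm_of_nonneg ht.1]; exact ht.2)
  have hcorner : ∀ a b : ℂ, R !![0, fun t : ℝ => a + b * (t : ℂ); 0, 0] 0 1 = a + b := by
    intro a b
    have := hext 0 0 a b
    have h2 := congrFun (congrFun this 0) 1
    exact h2
  have h1 : ∫ t, g t ∂lebesgue01 = 1 := by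
    have := hcorner 1 0
    rw [hR _ (by simpa using memLp_const (1:ℂ))] at this
    simpa using this
  have h2 : ∫ t, (t : ℂ) * g t ∂lebesgue01 = 1 := by
    have := hcorner 0 1
    rw [hR _ (by simpa using hT)] at this
    simpa using this
  have hTg : Integrable (fun t : ℝ => (t : ℂ) * g t) lebesgue01 := hg.mul_of_top_right hT
  have hSg : Integrable (fun t : ℝ => (1 - (t : ℂ)) * g t) lebesgue01 := by
    have := hg.sub hTg
    refine this.congr (Filter.Eventually.of_forall fun t => ?_)
    simp; ring
  have hz : ∀ E : Set ℝ, MeasurableSet E → ∫ t in E, (1 - (t : ℂ)) * g t ∂lebesgue01 = 0 := by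
    intro E hE
    have key : ∀ s : ℝ, |s| ≤ 1 →
        ‖1 + (s : ℂ) * ∫ t in E, (1 - (t : ℂ)) * g t ∂lebesgue01‖ ≤ 1 := by
      intro s hs
      set u : ℝ → ℂ := fun t => (((Set.Icc (0:ℝ) 1).indicator
        (fun t => t + s * E.indicator (fun t => 1 - t) t) t : ℝ) : ℂ) with hu
      have hum : Measurable u := by
        refine Complex.measurable_ofReal.comp (Measurable.indicator ?_ measurableSet_Icc)
        exact measurable_id.add (measurable_const.mul
          ((measurable_const.sub measurable_id).indicator hE))
      have hub : ∀ t, ‖u t‖ ≤ 1 := by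
        intro t
        rw [hu]
        simp only [Complex.norm_real, Real.norm_eq_abs]
        by_cases ht : t ∈ Set.Icc (0:ℝ) 1
        · rw [Set.indicator_of_mem ht]
          obtain ⟨ha, hb⟩ := ht
          obtain ⟨hc, hd⟩ := abs_le.1 hs
          by_cases hE' : t ∈ E
          · rw [Set.indicator_of_mem hE', abs_le]
            constructor <;> nlinarith
          · rw [Set.indicator_of_notMem hE', abs_le]
            constructor <;> linarith
        · rw [Set.indicator_of_notMem ht]; simp
      have h := hr_phi R hpos hext u hum hub
      rw [hR u (htop u hum fun t _ => hub t)] at h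
      have e : ∫ t, u t * g t ∂lebesgue01 =
          1 + (s : ℂ) * ∫ t in E, (1 - (t : ℂ)) * g t ∂lebesgue01 := by
        rw [← integral_indicator hE, ← integral_const_mul]
        conv_rhs => enter [1]; rw [← h2]
        rw [← integral_add hTg ((hSg.indicator hE).const_mul _)]
        refine integral_congr_ae (hmem.mono fun t ht => ?_)
        simp only [hu]
        rw [Set.indicator_of_mem ht]
        by_cases hE' : t ∈ E
        · simp only [Set.indicator_of_mem hE']; push_cast; ring
        · simp only [Set.indicator_of_notMem hE']; push_cast; ring
      rwa [e] at h
    apply hr_z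
    · simpa using key 1 (by simp)
    · simpa [sub_eq_add_neg] using key (-1) (by simp)
  have hae := hSg.ae_eq_zero_of_forall_setIntegral_eq_zero (fun E hE _ => hz E hE)
  have hne : ∀ᵐ t ∂lebesgue01, t ≠ (1:ℝ) := by
    apply ae_restrict_of_ae
    exact Measure.ae_ne volume 1
  have hg0 : g =ᵐ[lebesgue01] 0 := by
    filter_upwards [hae, hne] with t ht h
    simp only [Pi.zero_apply, mul_eq_zero] at ht ⊢
    refine ht.resolve_left fun h' => h ?_
    exact_mod_cast (sub_eq_zero.1 h').symm
  rw [integral_congr_ae hg0] at h1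
  simp at h1
end
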